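/- Let μ ∈ ℝ, c ≠ 0 and σ > 0 with μc < 0. Then ∫₀^∞ |c| / (σ√(2πt³)) · exp(−(μt−c)² / (2σ²t)) dt = exp(2μc/σ²), which is strictly less than 1; that is, the inverse Gaussian first-passage density is defective when μc < 0. -/

import Mathlib

open MeasureTheory Real

/-
After rescaling by `σ` and replacing `(μ, c)` by `(-μ, -c)` if necessary, the density is
`a t^(-3/2) φ(z_b(t))` with `a > 0`, where `φ` is the standard normal density and
`z_b(t) = b √t - a / √t`. Because `z_{-b}(t)² = z_b(t)² + 4ab`, the reflection-principle combination
`Φ(z_b(t)) + exp(2ab) Φ(z_{-b}(t))` is a primitive. It vanishes as `t → 0⁺`, since `z_{±b} → -∞`.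
As `t → ∞`, the signs of `±b` decide which of the two terms survives, so the total mass is
`exp(ab - |ab|)`.
-/

open Filter ProbabilityTheory Set
open scoped NNReal Topology

theorem integral_Ioi_of_hasDerivAt_of_nonneg_of_tendsto_nhdsGT {g g' : ℝ → ℝ} {a l m : ℝ}
    (hderiv : ∀ x ∈ Ioi a, HasDerivAt g (g' x) x) (hg' : ∀ x ∈ Ioi a, 0 ≤ g' x)
    (hm : Tendsto g (𝓝[>] a) (𝓝 m)) (hl : Tendsto g atTop (𝓝 l)) :
    ∫ x in Ioi a, g' x = l - m := by
  have hupdate {x : ℝ} (hx : x ≠ a) : Function.update g a m =ᶠ[𝓝 x] g :=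
    (eventually_ne_nhds hx).mono fun _ hy => Function.update_of_ne hy m g
  have hcont : ContinuousWithinAt (Function.update g a m) (Ici a) a := by
    rwa [continuousWithinAt_update_same, Ici_sdiff_left]
  have htop : Tendsto (Function.update g a m) atTop (𝓝 l) :=
    hl.congr' <| (eventually_ne_atTop a).mono fun _ hx => (Function.update_of_ne hx m g).symm
  simpa only [Function.update_self] using integral_Ioi_of_hasDerivAt_of_nonneg hcont
    (fun x hx => (hderiv x hx).congr_of_eventuallyEq (hupdate (ne_of_gt hx))) hg' htop

theorem hasDerivAt_setIntegral_Iic {E : Type*} [NormedAddCommGroup E] [NormedSpace ℝ E]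
    [CompleteSpace E] {f : ℝ → E} {x : ℝ} (hf : Integrable f) (hx : ContinuousAt f x) :
    HasDerivAt (fun y => ∫ u in Iic y, f u) (f x) x := by
  have hsplit (y : ℝ) : ∫ u in Iic y, f u = (∫ u in Iic x, f u) + ∫ u in x..y, f u := by
    rw [← intervalIntegral.integral_Iic_sub_Iic hf.integrableOn hf.integrableOn]
    abel
  rw [funext hsplit]
  exact (intervalIntegral.integral_hasDerivAt_right hf.intervalIntegrable
    hf.aestronglyMeasurable.stronglyMeasurableAtFilter hx).const_add _

theorem hasDerivAt_cdf_gaussianReal (m : ℝ) {v : ℝ≥0} (hv : v ≠ 0) (x : ℝ) :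
    HasDerivAt (cdf (gaussianReal m v)) (gaussianPDFReal m v x) x := by
  have hcdf (y : ℝ) : cdf (gaussianReal m v) y = ∫ u in Iic y, gaussianPDFReal m v u := by
    rw [cdf_eq_real, measureReal_def, gaussianReal_apply_eq_integral m hv, ENNReal.toReal_ofReal]
    exact integral_nonneg (gaussianPDFReal_nonneg m v)
  have hcont : Continuous (gaussianPDFReal m v) := by
    unfold gaussianPDFReal
    fun_prop
  rw [funext hcdf]
  exact hasDerivAt_setIntegral_Iic (integrable_gaussianPDFReal m v) hcont.continuousAt

theorem cdf_eq_half_of_map_const_sub {ν : Measure ℝ} [IsProbabilityMeasure ν]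
    [NullSingletonClass ν] {m : ℝ} (hν : ν.map (fun x => m + m - x) = ν) : cdf ν m = 1 / 2 := by
  have hreflect : ν.real (Iic m) = ν.real (Ioi m) := by
    have hpre : (fun x => m + m - x) ⁻¹' Iic m = Ici m := by simp
    calc ν.real (Iic m) = (ν.map (fun x => m + m - x)).real (Iic m) := by rw [hν]
      _ = ν.real (Ici m) := by
        rw [map_measureReal_apply (by fun_prop) measurableSet_Iic, hpre]
      _ = ν.real (Ioi m) := (measureReal_congr Ioi_ae_eq_Ici).symm
  have htotal : ν.real (Iic m) + ν.real (Ioi m) = 1 := by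
    rw [← compl_Iic, probReal_add_probReal_compl measurableSet_Iic]
  rw [cdf_eq_real]
  linarith

theorem cdf_gaussianReal_mean (m : ℝ) {v : ℝ≥0} (hv : v ≠ 0) :
    cdf (gaussianReal m v) m = 1 / 2 := by
  have := nullSingletonClass_gaussianReal (μ := m) hv
  exact cdf_eq_half_of_map_const_sub (by rw [gaussianReal_map_const_sub, add_sub_cancel_right])

local notation "φ" => gaussianPDFReal 0 1
local notation "Φ" => cdf (gaussianReal 0 1)

/-- The standardized distance `(b t - a) / √t` at time `t` between a Brownian motion with drift `b`
and the level `a`, in the form `b √t - a / √t`. Only `t > 0` is meaningful: at `t = 0` the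
convention `a / 0 = 0` gives `0` instead of the limit `-∞`. -/
noncomputable def standardizedDistance (a b t : ℝ) : ℝ :=
  b * √t - a / √t

/-- The density of the time at which a standard Brownian motion with drift `b` first hits the
level `a > 0`. -/
noncomputable def inverseGaussianPDF (a b t : ℝ) : ℝ :=
  a / √t ^ 3 * φ (standardizedDistance a b t)

/-- The probability that a standard Brownian motion with drift `b` hits the level `a > 0` before
time `t > 0`, as given by the reflection principle. -/
noncomputable def inverseGaussianCDF (a b t : ℝ) : ℝ :=
  Φ (standardizedDistance a b t) + exp (2 * (a * b)) * Φ (standardizedDistance a (-b) t)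

section InverseGaussian

variable {a b t : ℝ}

theorem hasDerivAt_standardizedDistance (ht : 0 < t) :
    HasDerivAt (standardizedDistance a b) (b / (2 * √t) + a / (2 * √t ^ 3)) t := by
  have hs : √t ≠ 0 := (sqrt_pos.2 ht).ne'
  have hsqrt := hasDerivAt_sqrt ht.ne'
  refine ((hsqrt.const_mul b).sub ((hasDerivAt_const t a).div hsqrt hs)).congr_deriv ?_
  field_simp
  ring

theorem tendsto_standardizedDistance_nhdsGT_zero (ha : 0 < a) :
    Tendsto (standardizedDistance a b) (𝓝[>] 0) atBot := by
  have hsqrt : Tendsto (√·) (𝓝[>] 0) (𝓝 0) :=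
    (continuous_sqrt.tendsto' 0 0 sqrt_zero).mono_left nhdsWithin_le_nhds
  have hsqrt_gt : Tendsto (√·) (𝓝[>] 0) (𝓝[>] 0) :=
    tendsto_nhdsWithin_iff.2
      ⟨hsqrt, eventually_mem_nhdsWithin.mono fun _ => sqrt_pos.2⟩
  have hdiv : Tendsto (fun t => a / √t) (𝓝[>] 0) atTop :=
    hsqrt_gt.inv_tendsto_nhdsGT_zero.const_mul_atTop ha
  exact (hsqrt.const_mul b).add_atBot (tendsto_neg_atTop_atBot.comp hdiv)

theorem tendsto_standardizedDistance_atTop_of_pos (hb : 0 < b) :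
    Tendsto (standardizedDistance a b) atTop atTop :=
  (tendsto_sqrt_atTop.const_mul_atTop hb).atTop_add (tendsto_sqrt_atTop.const_div_atTop a).neg

theorem tendsto_standardizedDistance_atTop_of_neg (hb : b < 0) :
    Tendsto (standardizedDistance a b) atTop atBot :=
  (tendsto_sqrt_atTop.const_mul_atTop_of_neg hb).atBot_add
    (tendsto_sqrt_atTop.const_div_atTop a).neg

theorem tendsto_standardizedDistance_zero_atTop :
    Tendsto (standardizedDistance a 0) atTop (𝓝 0) := by
  unfold standardizedDistance
  simpa using (tendsto_sqrt_atTop.const_div_atTop a).neg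

theorem exp_mul_gaussianPDFReal_standardizedDistance_neg (ht : 0 < t) :
    exp (2 * (a * b)) * φ (standardizedDistance a (-b) t) = φ (standardizedDistance a b t) := by
  have hs : √t ≠ 0 := (sqrt_pos.2 ht).ne'
  have hsq : standardizedDistance a (-b) t ^ 2 = standardizedDistance a b t ^ 2 + 4 * (a * b) := by
    simp only [standardizedDistance]
    field_simp
    ring
  simp only [gaussianPDFReal, NNReal.coe_one, mul_one, sub_zero, hsq]
  rw [mul_left_comm, ← exp_add]
  ring_nf

theorem inverseGaussianPDF_nonneg (ha : 0 ≤ a) : 0 ≤ inverseGaussianPDF a b t :=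
  mul_nonneg (by positivity) (gaussianPDFReal_nonneg _ _ _)

theorem hasDerivAt_inverseGaussianCDF (ht : 0 < t) :
    HasDerivAt (inverseGaussianCDF a b) (inverseGaussianPDF a b t) t := by
  have hΦ (b' : ℝ) : HasDerivAt (fun s => Φ (standardizedDistance a b' s))
      (φ (standardizedDistance a b' t) * (b' / (2 * √t) + a / (2 * √t ^ 3))) t :=
    (hasDerivAt_cdf_gaussianReal 0 one_ne_zero _).comp t (hasDerivAt_standardizedDistance ht)
  refine ((hΦ b).add ((hΦ (-b)).const_mul (exp (2 * (a * b))))).congr_deriv ?_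
  rw [← mul_assoc, exp_mul_gaussianPDFReal_standardizedDistance_neg ht, inverseGaussianPDF]
  ring

theorem tendsto_inverseGaussianCDF_nhdsGT_zero (ha : 0 < a) :
    Tendsto (inverseGaussianCDF a b) (𝓝[>] 0) (𝓝 0) := by
  have hΦ (b' : ℝ) : Tendsto (fun t => Φ (standardizedDistance a b' t)) (𝓝[>] 0) (𝓝 0) :=
    (tendsto_cdf_atBot _).comp (tendsto_standardizedDistance_nhdsGT_zero ha)
  unfold inverseGaussianCDF
  simpa only [mul_zero, add_zero] using (hΦ b).add ((hΦ (-b)).const_mul (exp (2 * (a * b))))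

theorem tendsto_inverseGaussianCDF_atTop (ha : 0 < a) :
    Tendsto (inverseGaussianCDF a b) atTop (𝓝 (exp (a * b - |a * b|))) := by
  have hpos {b' : ℝ} (hb' : 0 < b') :
      Tendsto (fun t => Φ (standardizedDistance a b' t)) atTop (𝓝 1) :=
    (tendsto_cdf_atTop _).comp (tendsto_standardizedDistance_atTop_of_pos hb')
  have hneg {b' : ℝ} (hb' : b' < 0) :
      Tendsto (fun t => Φ (standardizedDistance a b' t)) atTop (𝓝 0) :=
    (tendsto_cdf_atBot _).comp (tendsto_standardizedDistance_atTop_of_neg hb')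
  unfold inverseGaussianCDF
  rcases lt_trichotomy b 0 with hb | rfl | hb
  · have hexp : 2 * (a * b) = a * b - |a * b| := by
      rw [abs_of_neg (mul_neg_of_pos_of_neg ha hb)]
      ring
    simpa only [hexp, mul_one, zero_add] using
      (hneg hb).add ((hpos (neg_pos.2 hb)).const_mul (exp (2 * (a * b))))
  · have hzero : Tendsto (fun t => Φ (standardizedDistance a 0 t)) atTop (𝓝 (1 / 2)) := by
      rw [← cdf_gaussianReal_mean 0 one_ne_zero]
      exact (hasDerivAt_cdf_gaussianReal 0 one_ne_zero 0).continuousAt.tendsto.comp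
        tendsto_standardizedDistance_zero_atTop
    simpa only [mul_zero, abs_zero, sub_self, exp_zero, neg_zero, one_mul, add_halves] using
      hzero.add hzero
  · have hexp : a * b - |a * b| = 0 := by rw [abs_of_pos (mul_pos ha hb), sub_self]
    simpa only [hexp, exp_zero, mul_zero, add_zero] using
      (hpos hb).add ((hneg (neg_neg_iff_pos.2 hb)).const_mul (exp (2 * (a * b))))

theorem integral_inverseGaussianPDF (ha : 0 < a) :
    ∫ t in Ioi 0, inverseGaussianPDF a b t = exp (a * b - |a * b|) := by
  simpa only [sub_zero] using integral_Ioi_of_hasDerivAt_of_nonneg_of_tendsto_nhdsGT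
    (fun _ ht => hasDerivAt_inverseGaussianCDF ht) (fun _ _ => inverseGaussianPDF_nonneg ha.le)
    (tendsto_inverseGaussianCDF_nhdsGT_zero ha) (tendsto_inverseGaussianCDF_atTop ha)

theorem inverseGaussianPDF_div_div {c μ σ : ℝ} (hσ : σ ≠ 0) (ht : 0 < t) :
    inverseGaussianPDF (c / σ) (μ / σ) t =
      c / (σ * √(2 * π * t ^ 3)) * exp (-(μ * t - c) ^ 2 / (2 * σ ^ 2 * t)) := by
  have hsq : √t ^ 2 = t := sq_sqrt ht.le
  have hsqrt : √(2 * π * t ^ 3) = √(2 * π) * √t ^ 3 := by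
    rw [sqrt_mul (by positivity), pow_succ t, sqrt_mul (sq_nonneg t), sqrt_sq ht.le, pow_succ √t,
      hsq]
  have hdist : standardizedDistance (c / σ) (μ / σ) t = (μ * t - c) / (σ * √t) := by
    rw [standardizedDistance]
    field_simp
    rw [hsq]
  simp only [inverseGaussianPDF, gaussianPDFReal, NNReal.coe_one, mul_one, sub_zero, hdist, hsqrt,
    div_pow, mul_pow, hsq]
  field_simp

end InverseGaussian

theorem stmt4_general (μ c σ : ℝ) (hc : c ≠ 0) (hσ : 0 < σ) :
    (∫ t in Ioi (0 : ℝ),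
      |c| / (σ * √(2 * π * t ^ 3)) * exp (-(μ * t - c) ^ 2 / (2 * σ ^ 2 * t)))
      = exp ((μ * c - |μ * c|) / σ ^ 2) ∧
    (exp ((μ * c - |μ * c|) / σ ^ 2) < 1 ↔ μ * c < 0) := by
  constructor
  · wlog hc_pos : 0 < c generalizing μ c
    · have hc_neg : 0 < -c := neg_pos.2 (lt_of_le_of_ne (not_lt.1 hc_pos) hc)
      have hsq (t : ℝ) : (-μ * t - -c) ^ 2 = (μ * t - c) ^ 2 := by ring
      simpa only [abs_neg, neg_mul_neg, hsq] using this (-μ) (-c) hc_neg.ne' hc_neg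
    have hexp : c / σ * (μ / σ) - |c / σ * (μ / σ)| = (μ * c - |μ * c|) / σ ^ 2 := by
      rw [div_mul_div_comm, abs_div, abs_of_pos (mul_pos hσ hσ), ← sub_div, mul_comm c, sq]
    rw [← hexp, ← integral_inverseGaussianPDF (div_pos hc_pos hσ), abs_of_pos hc_pos]
    exact setIntegral_congr_fun measurableSet_Ioi fun t ht =>
      (inverseGaussianPDF_div_div hσ.ne' ht).symm
  · rw [exp_lt_one_iff, div_lt_iff₀ (by positivity), zero_mul, sub_neg,
      (le_abs_self _).lt_iff_ne, ne_comm, Ne, abs_eq_self, not_le]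

/-- When `μ c < 0`, the inverse Gaussian first-passage density is defective:
it integrates to `exp (2 μ c / σ²) < 1` over `(0, ∞)`. -/
theorem stmt4 (μ c σ : ℝ) (hc : c ≠ 0) (hσ : 0 < σ) (hμc : μ * c < 0) :
    (∫ t in Set.Ioi (0 : ℝ),
      |c| / (σ * Real.sqrt (2 * π * t ^ 3)) *
        Real.exp (-(μ * t - c) ^ 2 / (2 * σ ^ 2 * t)))
      = Real.exp (2 * μ * c / σ ^ 2) ∧
    Real.exp (2 * μ * c / σ ^ 2) < 1 := by
  have habs : 2 * μ * c = μ * c - |μ * c| := by rw [abs_of_neg hμc]; ring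
  simpa only [habs, hμc, iff_true] using stmt4_general μ c σ hc hσ
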